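/- There is an absolute constant c > 0 with the following property. Let K be a convex body in ℝ^n. Then for every 1 ≤ k ≤ n−1 and every k-dimensional linear subspace H of ℝ^n, vol_k((K−K) ∩ H)^{1/k} ≤ c·(n/k)² · vol_k(K ∩ (bar(K)+H))^{1/k}, where K−K = {x−y : x,y ∈ K} is the difference body and bar(K) is the barycenter of K. -/

import Mathlib

open MeasureTheory Metric Set
open scoped ENNReal RealInnerProductSpace Pointwise

noncomputable section

/-- The barycenter of a set. -/
def barycenter {n : ℕ} (K : Set (EuclideanSpace ℝ (Fin n))) : EuclideanSpace ℝ (Fin n) :=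
  (volume K).toReal⁻¹ • ∫ x in K, x

theorem bm1_add {A B C : Set ℝ} (hA : MeasurableSet A) (hB : MeasurableSet B)
    (hAn : A.Nonempty) (hBn : B.Nonempty) (h : ∀ a ∈ A, ∀ b ∈ B, a + b ∈ C) :
    volume A + volume B ≤ volume C := by
  obtain ⟨a0, ha0⟩ := hAn
  obtain ⟨b0, hb0⟩ := hBn
  rw [hA.measure_eq_iSup_isCompact, hB.measure_eq_iSup_isCompact]
  simp only [iSup_and']
  have key : ∀ A' ⊆ A, IsCompact A' → ∀ B' ⊆ B, IsCompact B' →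
      volume A' + volume B' ≤ volume C := by
    intro A' hA' cA' B' hB' cB'
    rcases A'.eq_empty_or_nonempty with rfl | nA
    · simp only [measure_empty, zero_add]
      calc volume B' = volume ((fun x => a0 + x) '' B') := by simp
        _ ≤ volume C := measure_mono (by rintro _ ⟨x, hx, rfl⟩; exact h _ ha0 _ (hB' hx))
    rcases B'.eq_empty_or_nonempty with rfl | nB
    · simp only [measure_empty, add_zero]
      calc volume A' = volume ((fun x => x + b0) '' A') := by simp
        _ ≤ volume C := measure_mono (by rintro _ ⟨x, hx, rfl⟩; exact h _ (hA' hx) _ hb0)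
    obtain ⟨α, hα⟩ := cA'.exists_isGreatest nA
    obtain ⟨β, hβ⟩ := cB'.exists_isLeast nB
    have e1 : volume A' = volume ((fun x => x + β) '' A') := by simp
    have e2 : volume B' = volume ((fun x => α + x) '' B') := by simp
    rw [e1, e2, ← measure_union₀]
    · refine measure_mono (union_subset ?_ ?_)
      · rintro _ ⟨x, hx, rfl⟩; exact h _ (hA' hx) _ (hB' hβ.1)
      · rintro _ ⟨x, hx, rfl⟩; exact h _ (hA' hα.1) _ (hB' hx)
    · exact (cB'.image (by fun_prop)).measurableSet.nullMeasurableSet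
    · refine measure_mono_null (t := {α + β}) ?_ (by simp)
      rintro _ ⟨⟨x, hx, rfl⟩, ⟨y, hy, hxy⟩⟩
      have := hα.2 hx
      have := hβ.2 hy
      simp only [mem_singleton_iff] at *
      linarith
  exact ENNReal.biSup_add_biSup_le' (p := fun K => K ⊆ A ∧ IsCompact K)
    (q := fun K => K ⊆ B ∧ IsCompact K) ⟨∅, by simp⟩ ⟨∅, by simp⟩
    fun A' hA' B' hB' => key A' hA'.1 hA'.2 B' hB'.1 hB'.2

theorem bm1 {A B C : Set ℝ} (hA : MeasurableSet A) (hB : MeasurableSet B)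
    (hAn : A.Nonempty) (hBn : B.Nonempty) {t : ℝ} (ht0 : 0 < t) (ht1 : t < 1)
    (h : ∀ a ∈ A, ∀ b ∈ B, (1 - t) * a + t * b ∈ C) :
    ENNReal.ofReal (1 - t) * volume A + ENNReal.ofReal t * volume B ≤ volume C := by
  have h1 : 0 < 1 - t := by linarith
  have := bm1_add (C := C) (hA.const_smul₀ (1 - t)) (hB.const_smul₀ t) (hAn.smul_set) hBn.smul_set
    (by rintro _ ⟨a, ha, rfl⟩ _ ⟨b, hb, rfl⟩; exact h a ha b hb)
  simpa [Measure.addHaar_smul, abs_of_pos h1, abs_of_pos ht0] using this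

theorem amgm_ennreal (a b : ℝ≥0∞) {t : ℝ} (ht0 : 0 < t) (ht1 : t < 1) :
    a ^ (1 - t) * b ^ t ≤ ENNReal.ofReal (1 - t) * a + ENNReal.ofReal t * b := by
  have h1 : 0 < 1 - t := by linarith
  rcases eq_or_ne a ⊤ with rfl | ha
  · rw [ENNReal.mul_top (by simpa using h1), top_add]; exact le_top
  rcases eq_or_ne b ⊤ with rfl | hb
  · rw [ENNReal.mul_top (by simpa using ht0), add_top]; exact le_top
  lift a to NNReal using ha
  lift b to NNReal using hb
  have := NNReal.geom_mean_le_arith_mean2_weighted (Real.toNNReal (1-t)) (Real.toNNReal t) a b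
    (by rw [← Real.toNNReal_add h1.le ht0.le]; simp)
  rw [Real.coe_toNNReal _ h1.le, Real.coe_toNNReal _ ht0.le] at this
  rw [← ENNReal.coe_rpow_of_nonneg _ h1.le, ← ENNReal.coe_rpow_of_nonneg _ ht0.le]
  unfold ENNReal.ofReal
  exact_mod_cast this

theorem pl1_norm {F G H : ℝ → ℝ≥0∞} (hF : Measurable F) (hG : Measurable G) (hH : Measurable H)
    {t : ℝ} (ht0 : 0 < t) (ht1 : t < 1) (hF1 : ⨆ x, F x = 1) (hG1 : ⨆ x, G x = 1)
    (h : ∀ x y, F x ^ (1 - t) * G y ^ t ≤ H ((1 - t) * x + t * y)) :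
    (∫⁻ x, F x) ^ (1 - t) * (∫⁻ x, G x) ^ t ≤ ∫⁻ x, H x := by
  have h1 : 0 < 1 - t := by linarith
  refine (amgm_ennreal _ _ ht0 ht1).trans ?_
  have lc : ∀ F : ℝ → ℝ≥0∞, Measurable F → (∀ x, F x ≤ 1) →
      ∫⁻ x, F x = ∫⁻ s in Ioo (0:ℝ) 1, volume {x | ENNReal.ofReal s < F x} := by
    intro F hF hF1
    have e := lintegral_eq_lintegral_meas_lt (volume : Measure ℝ) (f := fun x => (F x).toReal)
      (Filter.Eventually.of_forall fun x => ENNReal.toReal_nonneg) hF.ennreal_toReal.aemeasurable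
    have e' : ∀ x, ENNReal.ofReal (F x).toReal = F x := fun x =>
      ENNReal.ofReal_toReal (ne_top_of_le_ne_top (by simp) (hF1 x))
    simp only [e'] at e
    rw [e, ← Ioo_union_Ici_eq_Ioi zero_lt_one, lintegral_union measurableSet_Ici (by
      rw [Set.disjoint_left]; rintro x ⟨_, h⟩ h'; exact absurd h (not_lt.2 h'))]
    have z : ∫⁻ s in Ici (1:ℝ), volume {x | s < (F x).toReal} = 0 := by
      rw [setLIntegral_congr_fun (g := fun _ => 0) measurableSet_Ici, lintegral_zero]
      intro s hs
      have : {x | s < (F x).toReal} = ∅ := by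
        ext x
        simp only [mem_ofPred_eq, mem_empty_iff_false, iff_false, not_lt]
        refine le_trans ?_ hs
        exact ENNReal.toReal_le_of_le_ofReal zero_le_one (by simpa using hF1 x)
      simp [this]
    rw [z, add_zero]
    refine setLIntegral_congr_fun measurableSet_Ioo ?_
    intro s hs
    have : ∀ x, s < (F x).toReal ↔ ENNReal.ofReal s < F x := fun x =>
      (ENNReal.ofReal_lt_iff_lt_toReal hs.1.le (ne_top_of_le_ne_top (by simp) (hF1 x))).symm
    simp [this]
  have hmeas : ∀ F : ℝ → ℝ≥0∞, Measurable fun s : ℝ => volume {x | ENNReal.ofReal s < F x} := by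
    intro F
    refine Antitone.measurable fun s s' hs => measure_mono fun x hx => ?_
    exact lt_of_le_of_lt (ENNReal.ofReal_le_ofReal hs) hx
  calc _ = ENNReal.ofReal (1 - t) * (∫⁻ s in Ioo (0:ℝ) 1, volume {x | ENNReal.ofReal s < F x})
        + ENNReal.ofReal t * ∫⁻ s in Ioo (0:ℝ) 1, volume {x | ENNReal.ofReal s < G x} := by
        rw [lc F hF (fun x => hF1 ▸ le_iSup F x), lc G hG (fun x => hG1 ▸ le_iSup G x)]
    _ = ∫⁻ s in Ioo (0:ℝ) 1, (ENNReal.ofReal (1 - t) * volume {x | ENNReal.ofReal s < F x}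
        + ENNReal.ofReal t * volume {x | ENNReal.ofReal s < G x}) := by
        rw [lintegral_add_left ((hmeas F).const_mul _), lintegral_const_mul _ (hmeas F),
          lintegral_const_mul _ (hmeas G)]
    _ ≤ ∫⁻ s in Ioo (0:ℝ) 1, volume {x | ENNReal.ofReal s < min (H x) 1} := by
        refine setLIntegral_mono' measurableSet_Ioo fun s hs => ?_
        have hs1 : ENNReal.ofReal s < 1 := by simpa using hs.2
        refine bm1 (measurableSet_lt measurable_const hF) (measurableSet_lt measurable_const hG)
          ?_ ?_ ht0 ht1 ?_
        · exact lt_iSup_iff.1 (hF1 ▸ hs1)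
        · exact lt_iSup_iff.1 (hG1 ▸ hs1)
        · intro a ha b hb
          refine lt_min (lt_of_lt_of_le ?_ (h a b)) hs1
          have es : ENNReal.ofReal s = ENNReal.ofReal s ^ (1 - t) * ENNReal.ofReal s ^ t := by
            rw [← ENNReal.rpow_add_of_nonneg _ _ h1.le ht0.le]; simp
          rw [es]
          exact ENNReal.mul_lt_mul (ENNReal.rpow_lt_rpow ha h1) (ENNReal.rpow_lt_rpow hb ht0)
    _ = ∫⁻ x, min (H x) 1 := (lc _ (hH.min measurable_const) (fun x => min_le_right _ _)).symm
    _ ≤ ∫⁻ x, H x := lintegral_mono fun x => min_le_left _ _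

theorem pl1 {f g h : ℝ → ℝ≥0∞} (hf : Measurable f) (hg : Measurable g) (hh : Measurable h)
    {t : ℝ} (ht0 : 0 < t) (ht1 : t < 1) (hfb : ⨆ x, f x ≠ ⊤) (hgb : ⨆ x, g x ≠ ⊤)
    (H : ∀ x y, f x ^ (1 - t) * g y ^ t ≤ h ((1 - t) * x + t * y)) :
    (∫⁻ x, f x) ^ (1 - t) * (∫⁻ x, g x) ^ t ≤ ∫⁻ x, h x := by
  have h1 : 0 < 1 - t := by linarith
  rcases eq_or_ne (⨆ x, f x) 0 with ha | ha
  · have : ∀ x, f x = 0 := by simpa using ha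
    simp [this, h1]
  rcases eq_or_ne (⨆ x, g x) 0 with hb | hb
  · have : ∀ x, g x = 0 := by simpa using hb
    simp [this, ht0]
  obtain ⟨a, hadef⟩ : ∃ a, a = ⨆ x, f x := ⟨_, rfl⟩
  obtain ⟨b, hbdef⟩ : ∃ b, b = ⨆ x, g x := ⟨_, rfl⟩
  rw [← hadef] at ha hfb
  rw [← hbdef] at hb hgb
  have := pl1_norm (F := fun x => a⁻¹ * f x) (G := fun x => b⁻¹ * g x)
    (H := fun x => ((a⁻¹) ^ (1 - t) * (b⁻¹) ^ t) * h x) (hf.const_mul _) (hg.const_mul _)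
    (hh.const_mul _) ht0 ht1 (by rw [← ENNReal.mul_iSup, ← hadef, ENNReal.inv_mul_cancel ha hfb])
    (by rw [← ENNReal.mul_iSup, ← hbdef, ENNReal.inv_mul_cancel hb hgb]) (by
      intro x y
      rw [ENNReal.mul_rpow_of_nonneg _ _ h1.le, ENNReal.mul_rpow_of_nonneg _ _ ht0.le,
        mul_mul_mul_comm]
      gcongr
      exact H x y)
  rw [lintegral_const_mul _ hf, lintegral_const_mul _ hg, lintegral_const_mul _ hh,
    ENNReal.mul_rpow_of_nonneg _ _ h1.le, ENNReal.mul_rpow_of_nonneg _ _ ht0.le,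
        mul_mul_mul_comm] at this
  refine (ENNReal.mul_le_mul_iff_right ?_ ?_).1 this
  · exact mul_ne_zero (by simp [ENNReal.rpow_eq_zero_iff, ha, hfb])
      (by simp [ENNReal.rpow_eq_zero_iff, hb, hgb])
  · exact ENNReal.mul_ne_top (ENNReal.rpow_ne_top_of_nonneg h1.le (by simpa using ha))
      (ENNReal.rpow_ne_top_of_nonneg ht0.le (by simpa using hb))

theorem pln (k : ℕ) {t : ℝ} (ht0 : 0 < t) (ht1 : t < 1) (R : ℝ) :
    ∀ (M : ℝ≥0∞) (_ : M ≠ ⊤) (f g h : (Fin k → ℝ) → ℝ≥0∞) (_ : Measurable f)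
    (_ : Measurable g) (_ : Measurable h)
    (_ : ∀ x, f x ≤ (Icc (fun _ => -R) (fun _ => R)).indicator (fun _ => M) x)
    (_ : ∀ x, g x ≤ (Icc (fun _ => -R) (fun _ => R)).indicator (fun _ => M) x)
    (_ : ∀ x y, f x ^ (1 - t) * g y ^ t ≤ h ((1 - t) • x + t • y)),
    (∫⁻ x, f x) ^ (1 - t) * (∫⁻ x, g x) ^ t ≤ ∫⁻ x, h x := by
  have h1 : 0 < 1 - t := by linarith
  induction k with
  | zero =>
    intro M hM f g h hf hg hh hfb hgb H
    have e : (volume : Measure (Fin 0 → ℝ)) = Measure.dirac 0 := by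
      rw [volume_pi, Measure.pi_of_empty _ 0]
    rw [e, lintegral_dirac, lintegral_dirac, lintegral_dirac]
    convert H 0 0
  | succ k ih =>
    intro M hM f g h hf hg hh hfb hgb H
    have hmp := (volume_preserving_piFinSuccAbove (fun _ : Fin (k+1) => ℝ) 0).symm
    have hsymm : ∀ p : ℝ × (Fin k → ℝ),
        (MeasurableEquiv.piFinSuccAbove (fun _ : Fin (k+1) => ℝ) 0).symm p =
          (Fin.cons p.1 p.2 : Fin (k+1) → ℝ) := fun p => Fin.insertNth_zero' _ _
    have key : ∀ f : (Fin (k+1) → ℝ) → ℝ≥0∞, Measurable f →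
        Measurable (fun p : ℝ × (Fin k → ℝ) => f (Fin.cons p.1 p.2)) ∧
        ∫⁻ x, f x = ∫⁻ a, ∫⁻ y : Fin k → ℝ, f (Fin.cons a y) := by
      intro f hf
      have hm : Measurable (fun p : ℝ × (Fin k → ℝ) => f (Fin.cons p.1 p.2)) := by
        simp only [← hsymm]
        exact hf.comp hmp.measurable
      refine ⟨hm, ?_⟩
      rw [← hmp.lintegral_comp hf, Measure.volume_eq_prod]
      simp only [hsymm]
      exact lintegral_prod _ hm.aemeasurable
    have hbound : ∀ f : (Fin (k+1) → ℝ) → ℝ≥0∞,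
        (∀ x, f x ≤ (Icc (fun _ => -R) (fun _ => R)).indicator (fun _ => M) x) →
        ∀ (a : ℝ) (y : Fin k → ℝ), f (Fin.cons a y) ≤
          (Icc (fun _ => -R) (fun _ => R)).indicator (fun _ => M) y := by
      intro f hf a y
      refine (hf _).trans ?_
      by_cases hy : y ∈ Icc (fun _ => -R) (fun _ : Fin k => R)
      · rw [indicator_of_mem hy]; exact indicator_le_self _ _ _
      · rw [indicator_of_notMem hy, indicator_of_notMem]
        contrapose! hy
        exact ⟨fun i => by simpa using hy.1 i.succ, fun i => by simpa using hy.2 i.succ⟩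
    have hsup : ∀ f : (Fin (k+1) → ℝ) → ℝ≥0∞,
        (∀ x, f x ≤ (Icc (fun _ => -R) (fun _ => R)).indicator (fun _ => M) x) →
        ⨆ a : ℝ, ∫⁻ y : Fin k → ℝ, f (Fin.cons a y) ≠ ⊤ := by
      intro f hf
      have : ∫⁻ y : Fin k → ℝ, (Icc (fun _ => -R) (fun _ => R)).indicator (fun _ => M) y ≠ ⊤ := by
        rw [lintegral_indicator measurableSet_Icc, setLIntegral_const]
        exact ENNReal.mul_ne_top hM isCompact_Icc.measure_lt_top.ne
      exact ne_top_of_le_ne_top this (iSup_le fun a => lintegral_mono (hbound f hf a))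
    rw [(key f hf).2, (key g hg).2, (key h hh).2]
    refine pl1 (key f hf).1.lintegral_prod_right' (key g hg).1.lintegral_prod_right'
      (key h hh).1.lintegral_prod_right' ht0 ht1 (hsup f hfb) (hsup g hgb) ?_
    intro a b
    refine ih M hM _ _ _ ((key f hf).1.comp measurable_prodMk_left)
      ((key g hg).1.comp measurable_prodMk_left) ((key h hh).1.comp measurable_prodMk_left)
      (hbound f hfb a) (hbound g hgb b) ?_
    intro x y
    refine (H _ _).trans (le_of_eq ?_)
    dsimp only [Function.comp]
    congr 1
    ext i
    refine Fin.cases ?_ (fun j => ?_) i <;> simp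

theorem bm_log_pi (k : ℕ) {t : ℝ} (ht0 : 0 < t) (ht1 : t < 1) {A B : Set (Fin k → ℝ)}
    (hA : IsCompact A) (hB : IsCompact B) :
    volume A ^ (1 - t) * volume B ^ t ≤ volume ((1 - t) • A + t • B) := by
  have h1 : 0 < 1 - t := by linarith
  have hC : IsCompact ((1 - t) • A + t • B) := (hA.smul _).add (hB.smul _)
  obtain ⟨R, hR⟩ := (hA.union hB).isBounded.exists_norm_le
  have hbox : ∀ x ∈ A ∪ B, x ∈ Icc (fun _ : Fin k => -R) (fun _ => R) := by
    intro x hx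
    have : ∀ i, |x i| ≤ R := fun i => (norm_le_pi_norm x i).trans (hR x hx)
    exact ⟨fun i => (abs_le.1 (this i)).1, fun i => (abs_le.1 (this i)).2⟩
  have := pln k ht0 ht1 R 1 (by simp) (A.indicator 1) (B.indicator 1)
    (((1 - t) • A + t • B).indicator 1) (measurable_one.indicator hA.measurableSet)
    (measurable_one.indicator hB.measurableSet) (measurable_one.indicator hC.measurableSet)
    (fun x => indicator_le_indicator_of_subset (fun x hx => hbox x (Or.inl hx)) (by simp) x)
    (fun x => indicator_le_indicator_of_subset (fun x hx => hbox x (Or.inr hx)) (by simp) x) (by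
      intro x y
      by_cases hx : x ∈ A
      · by_cases hy : y ∈ B
        · rw [indicator_of_mem (s := (1 - t) • A + t • B)
            (add_mem_add (smul_mem_smul_set hx) (smul_mem_smul_set hy))]
          simp [hx, hy]
        · simp [hy, ht0]
      · simp [hx, h1])
  simpa [lintegral_indicator_one, hA.measurableSet, hB.measurableSet, hC.measurableSet] using this

theorem bm_log {U : Type*} [NormedAddCommGroup U] [NormedSpace ℝ U] [FiniteDimensional ℝ U]
    [MeasurableSpace U] [BorelSpace U] (μ : Measure U) [μ.IsAddHaarMeasure]
    {t : ℝ} (ht0 : 0 < t) (ht1 : t < 1) {A B : Set U} (hA : IsCompact A) (hB : IsCompact B) :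
    μ A ^ (1 - t) * μ B ^ t ≤ μ ((1 - t) • A + t • B) := by
  have h1 : 0 < 1 - t := by linarith
  let e : U ≃L[ℝ] (Fin (Module.finrank ℝ U) → ℝ) :=
    (Module.finBasis ℝ U).equivFun.toContinuousLinearEquiv
  have hc := Measure.isAddLeftInvariant_eq_smul μ (Measure.map e.symm volume)
  obtain ⟨c, hc⟩ : ∃ c : NNReal, μ = c • Measure.map e.symm volume := ⟨_, hc⟩
  have hm : ∀ S : Set U, μ S = c * volume (e '' S) := by
    intro S
    rw [hc, Measure.smul_apply, ENNReal.smul_def, smul_eq_mul]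
    congr 1
    rw [e.image_eq_preimage_symm]
    exact e.symm.toHomeomorph.toMeasurableEquiv.map_apply S
  rw [hm, hm, hm, ENNReal.mul_rpow_of_nonneg _ _ h1.le, ENNReal.mul_rpow_of_nonneg _ _ ht0.le,
        mul_mul_mul_comm, ← ENNReal.rpow_add_of_nonneg _ _ h1.le ht0.le]
  simp only [sub_add_cancel, ENNReal.rpow_one]
  gcongr
  have := bm_log_pi _ ht0 ht1 (hA.image e.continuous) (hB.image e.continuous)
  rwa [← image_smul_set, ← image_smul_set, ← image_add] at this

theorem bm_pow {U : Type*} [NormedAddCommGroup U] [NormedSpace ℝ U] [FiniteDimensional ℝ U]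
    [MeasurableSpace U] [BorelSpace U] (μ : Measure U) [μ.IsAddHaarMeasure]
    {k : ℕ} (hk : Module.finrank ℝ U = k)
    {t : ℝ} (ht0 : 0 ≤ t) (ht1 : t ≤ 1) {A B C : Set U} (hA : IsCompact A) (hB : IsCompact B)
    (hC : IsCompact C) (hAn : A.Nonempty) (hBn : B.Nonempty)
    (h : ∀ x ∈ A, ∀ y ∈ B, (1 - t) • x + t • y ∈ C)
    {a b : ℝ} (ha : 0 ≤ a) (hb : 0 ≤ b) (hak : a ^ k = μ.real A) (hbk : b ^ k = μ.real B) :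
    ((1 - t) * a + t * b) ^ k ≤ μ.real C := by
  have h1 : 0 ≤ 1 - t := by linarith
  obtain ⟨x0, hx0⟩ := hAn
  obtain ⟨y0, hy0⟩ := hBn
  have hsm : ∀ (r : ℝ) (_ : 0 ≤ r) (S : Set U), μ.real (r • S) = r ^ k * μ.real S := by
    intro r hr S
    rw [measureReal_def, Measure.addHaar_smul, hk, ENNReal.toReal_mul,
      ENNReal.toReal_ofReal (abs_nonneg _), abs_of_nonneg (pow_nonneg hr k), measureReal_def]
  have hfin : μ C ≠ ⊤ := hC.measure_lt_top.ne
  by_cases hza : (1 - t) * a = 0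
  · rw [hza, zero_add, mul_pow, hbk, ← hsm t ht0]
    calc μ.real (t • B) = μ.real ((fun y => (1 - t) • x0 + y) '' (t • B)) := by
          simp [measureReal_def]
      _ ≤ μ.real C := measureReal_mono (by
          rintro _ ⟨_, ⟨y, hy, rfl⟩, rfl⟩; exact h _ hx0 _ hy) hfin
  by_cases hzb : t * b = 0
  · rw [hzb, add_zero, mul_pow, hak, ← hsm _ h1]
    calc μ.real ((1 - t) • A) = μ.real ((fun y => y + t • y0) '' ((1 - t) • A)) := by
          simp [measureReal_def]
      _ ≤ μ.real C := measureReal_mono (by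
          rintro _ ⟨_, ⟨y, hy, rfl⟩, rfl⟩; exact h _ hy _ hy0) hfin
  have hta : 0 < (1 - t) * a := lt_of_le_of_ne (by positivity) (Ne.symm hza)
  have htb : 0 < t * b := lt_of_le_of_ne (by positivity) (Ne.symm hzb)
  have ha' : 0 < a := pos_of_mul_pos_right hta h1
  have hb' : 0 < b := pos_of_mul_pos_right htb ht0
  set ρ := (1 - t) * a + t * b with hρ
  have hρ0 : 0 < ρ := by positivity
  have hs : 1 - t * b / ρ = (1 - t) * a / ρ := by field_simp; rw [hρ]; ring
  have key := bm_log μ (t := t * b / ρ) (by positivity)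
    (by rw [div_lt_one hρ0]; linarith) (hA.smul a⁻¹) (hB.smul b⁻¹)
  have one : ∀ (S : Set U) (a : ℝ), IsCompact S → 0 < a → a ^ k = μ.real S → μ (a⁻¹ • S) = 1 := by
    intro S a hS ha hak
    have : μ.real (a⁻¹ • S) = 1 := by rw [hsm _ (by positivity), ← hak, ← mul_pow]; field_simp; simp
    rw [measureReal_def] at this
    rw [← ENNReal.ofReal_toReal (hS.smul a⁻¹).measure_lt_top.ne, this, ENNReal.ofReal_one]
  rw [one A a hA ha' hak, one B b hB hb' hbk, ENNReal.one_rpow, ENNReal.one_rpow, one_mul, hs]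
    at key
  have sub : ((1 - t) * a / ρ) • a⁻¹ • A + (t * b / ρ) • b⁻¹ • B ⊆ ρ⁻¹ • C := by
    rintro _ ⟨_, ⟨_, ⟨x, hx, rfl⟩, rfl⟩, _, ⟨_, ⟨y, hy, rfl⟩, rfl⟩, rfl⟩
    refine ⟨_, h x hx y hy, ?_⟩
    simp only [smul_add, smul_smul]
    congr 2 <;> field_simp
  have k2 : 1 ≤ μ.real (ρ⁻¹ • C) := by
    have := ENNReal.toReal_mono (hC.smul ρ⁻¹).measure_lt_top.ne (key.trans (measure_mono sub))
    simpa [measureReal_def] using this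
  rw [hsm _ (by positivity), inv_pow] at k2
  rwa [← div_eq_inv_mul, one_le_div (by positivity)] at k2

section body
set_option linter.unusedSectionVars false
variable {U V : Type*} [NormedAddCommGroup U] [NormedSpace ℝ U] [FiniteDimensional ℝ U]
    [MeasurableSpace U] [BorelSpace U] [NormedAddCommGroup V] [NormedSpace ℝ V]
    [FiniteDimensional ℝ V] [MeasurableSpace V] [BorelSpace V]

def sec (K : Set (U × V)) (v : V) : Set U := (fun u => (u, v)) ⁻¹' K

theorem sec_compact {K : Set (U × V)} (hK : IsCompact K) (v : V) : IsCompact (sec K v) := by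
  refine (hK.image continuous_fst).of_isClosed_subset (hK.isClosed.preimage (by fun_prop)) ?_
  intro u hu
  exact ⟨(u, v), hu, rfl⟩

theorem sec_usc (μ : Measure U) [μ.IsAddHaarMeasure] {K : Set (U × V)} (hK : IsCompact K) (v : V)
    {y : ℝ} (hy : μ.real (sec K v) < y) : ∀ᶠ w in nhds v, μ.real (sec K w) < y := by
  have hy' : μ (sec K v) < ENNReal.ofReal y := by
    rwa [ENNReal.lt_ofReal_iff_toReal_lt (sec_compact hK v).measure_lt_top.ne]
  obtain ⟨O, hO, hOo, hOm⟩ := Set.exists_isOpen_lt_of_lt _ _ hy'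
  have hcl : IsClosed (Prod.snd '' (K \ (Prod.fst ⁻¹' O))) :=
    ((hK.diff (hOo.preimage continuous_fst)).image continuous_snd).isClosed
  have hv : v ∈ (Prod.snd '' (K \ (Prod.fst ⁻¹' O)))ᶜ := by
    rintro ⟨⟨u, w⟩, ⟨h1, h2⟩, rfl⟩
    exact h2 (hO h1)
  filter_upwards [hcl.isOpen_compl.mem_nhds hv] with w hw
  rw [measureReal_def, ← ENNReal.lt_ofReal_iff_toReal_lt (sec_compact hK w).measure_lt_top.ne]
  refine lt_of_le_of_lt (measure_mono fun u hu => ?_) hOm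
  by_contra hu'
  exact hw ⟨(u, w), ⟨hu, hu'⟩, rfl⟩

def gg (μ : Measure U) (k : ℕ) (K : Set (U × V)) (v : V) : ℝ := μ.real (sec K v) ^ ((k : ℝ)⁻¹)

theorem gg_nonneg (μ : Measure U) (k : ℕ) (K : Set (U × V)) (v : V) : 0 ≤ gg μ k K v :=
  Real.rpow_nonneg measureReal_nonneg _

theorem gg_pow (μ : Measure U) {k : ℕ} (hk0 : k ≠ 0) (K : Set (U × V)) (v : V) :
    gg μ k K v ^ k = μ.real (sec K v) :=
  Real.rpow_inv_natCast_pow measureReal_nonneg hk0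

theorem gg_of_notMem (μ : Measure U) {k : ℕ} (hk0 : k ≠ 0) {K : Set (U × V)} {v : V}
    (hv : v ∉ Prod.snd '' K) : gg μ k K v = 0 := by
  have : sec K v = ∅ := by
    ext u
    simp only [mem_empty_iff_false, iff_false]
    exact fun hu => hv ⟨(u, v), hu, rfl⟩
  rw [gg, this, measureReal_empty, Real.zero_rpow (by positivity)]

theorem gg_measurable (μ : Measure U) [SFinite μ] (k : ℕ) {K : Set (U × V)} (hK : IsCompact K) :
    Measurable (gg μ k K) :=
  (measurable_measure_prodMk_right hK.measurableSet).ennreal_toReal.pow_const _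

theorem gg_bdd (μ : Measure U) [μ.IsAddHaarMeasure] (k : ℕ) {K : Set (U × V)} (hK : IsCompact K)
    (v : V) : gg μ k K v ≤ μ.real (Prod.fst '' K) ^ ((k : ℝ)⁻¹) := by
  refine Real.rpow_le_rpow measureReal_nonneg (measureReal_mono ?_
    (hK.image continuous_fst).measure_lt_top.ne) (by positivity)
  intro u hu
  exact ⟨(u, v), hu, rfl⟩

theorem gg_concave (μ : Measure U) [μ.IsAddHaarMeasure] {k : ℕ} (hk : Module.finrank ℝ U = k)
    (hk0 : k ≠ 0) {K : Set (U × V)} (hK : IsCompact K) (hKc : Convex ℝ K) {t : ℝ} (ht0 : 0 ≤ t)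
    (ht1 : t ≤ 1) {v w : V} (hv : v ∈ Prod.snd '' K) (hw : w ∈ Prod.snd '' K) :
    (1 - t) * gg μ k K v + t * gg μ k K w ≤ gg μ k K ((1 - t) • v + t • w) := by
  refine le_of_pow_le_pow_left₀ hk0 (gg_nonneg _ _ _ _) ?_
  rw [gg_pow μ hk0]
  refine bm_pow μ hk ht0 ht1 (sec_compact hK v) (sec_compact hK w) (sec_compact hK _) ?_ ?_ ?_
    (gg_nonneg _ _ _ _) (gg_nonneg _ _ _ _) (gg_pow μ hk0 _ _) (gg_pow μ hk0 _ _)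
  · obtain ⟨⟨u, _⟩, h, rfl⟩ := hv; exact ⟨u, h⟩
  · obtain ⟨⟨u, _⟩, h, rfl⟩ := hw; exact ⟨u, h⟩
  · intro x hx y hy
    exact hKc hx hy (by linarith) ht0 (by ring)

def hyp (μ : Measure U) (k : ℕ) (K : Set (U × V)) : Set (V × ℝ) :=
  {p | p.1 ∈ Prod.snd '' K ∧ p.2 ≤ gg μ k K p.1}

theorem hyp_closed (μ : Measure U) [μ.IsAddHaarMeasure] {k : ℕ} (hk0 : k ≠ 0)
    {K : Set (U × V)} (hK : IsCompact K) : IsClosed (hyp μ k K) := by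
  suffices h : IsClosed {p : V × ℝ | p.2 ≤ gg μ k K p.1} from
    ((hK.image continuous_snd).isClosed.preimage continuous_fst).inter h
  rw [← isOpen_compl_iff, isOpen_iff_mem_nhds]
  rintro ⟨v, r⟩ h
  have h : gg μ k K v < r := not_le.1 h
  obtain ⟨q, hq1, hq2⟩ := exists_between h
  have hq0 : 0 ≤ q := (gg_nonneg _ _ _ _).trans hq1.le
  have h1 : ∀ᶠ w in nhds v, gg μ k K w < q := by
    have : μ.real (sec K v) < q ^ k := by
      rw [← gg_pow μ hk0]; exact pow_lt_pow_left₀ hq1 (gg_nonneg _ _ _ _) hk0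
    filter_upwards [sec_usc μ hK v this] with w hw
    rw [← gg_pow μ hk0] at hw
    exact lt_of_pow_lt_pow_left₀ k hq0 hw
  have h2 : ∀ᶠ s in nhds r, q < s := lt_mem_nhds hq2
  have := h1.prod_nhds h2
  filter_upwards [this] with p hp
  exact not_le.2 (hp.1.trans hp.2)

theorem hyp_convex (μ : Measure U) [μ.IsAddHaarMeasure] {k : ℕ} (hk : Module.finrank ℝ U = k)
    (hk0 : k ≠ 0) {K : Set (U × V)} (hK : IsCompact K) (hKc : Convex ℝ K) :
    Convex ℝ (hyp μ k K) := by
  rintro ⟨v, r⟩ ⟨hv, hr⟩ ⟨w, s⟩ ⟨hw, hs⟩ a b ha hb hab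
  have hP : Convex ℝ (Prod.snd '' K) := hKc.linear_image (LinearMap.snd ℝ U V)
  refine ⟨hP hv hw ha hb hab, ?_⟩
  obtain rfl : a = 1 - b := by linarith
  refine le_trans ?_ (gg_concave μ hk hk0 hK hKc hb (by linarith) hv hw)
  simp only [Prod.smul_mk, Prod.mk_add_mk, smul_eq_mul] at *
  gcongr

theorem fub (μ : Measure U) [μ.IsAddHaarMeasure] (ν : Measure V) [ν.IsAddHaarMeasure]
    {K : Set (U × V)} (hK : IsCompact K) {φ : V → ℝ} (hφ : Measurable φ) {M : ℝ}
    (hM : ∀ v, ‖φ v‖ ≤ M) :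
    IntegrableOn (fun z : U × V => φ z.2) K (μ.prod ν) ∧
    ∫ z in K, φ z.2 ∂(μ.prod ν) = ∫ v, φ v * μ.real (sec K v) ∂ν := by
  have hi : IntegrableOn (fun z : U × V => φ z.2) K (μ.prod ν) :=
    Measure.integrableOn_of_bounded (M := M) hK.measure_lt_top.ne
      (hφ.comp measurable_snd).aestronglyMeasurable (Filter.Eventually.of_forall fun z => hM _)
  refine ⟨hi, ?_⟩
  rw [← integral_indicator hK.measurableSet, integral_prod_symm]
  · congr 1
    ext v
    have : (fun u => K.indicator (fun z : U × V => φ z.2) (u, v)) =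
        (sec K v).indicator (fun _ => φ v) := by
      ext u; rfl
    rw [this, integral_indicator (sec_compact hK v).measurableSet, setIntegral_const, smul_eq_mul,
      mul_comm]
  · exact hi.integrable_indicator hK.measurableSet

theorem jensen (μ : Measure U) [μ.IsAddHaarMeasure] (ν : Measure V) [ν.IsAddHaarMeasure]
    {k : ℕ} (hk : Module.finrank ℝ U = k)
    (hk0 : k ≠ 0) {K : Set (U × V)} (hK : IsCompact K) (hKc : Convex ℝ K)
    (hpos : 0 < (μ.prod ν).real K) :
    ∫ v, gg μ k K v ^ (k + 1) ∂ν ≤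
      gg μ k K (((μ.prod ν).real K)⁻¹ • ∫ z in K, z.2 ∂(μ.prod ν)) * (μ.prod ν).real K := by
  have hF := fub μ ν hK (gg_measurable μ k hK) (M := μ.real (Prod.fst '' K) ^ ((k : ℝ)⁻¹))
    (fun v => by rw [Real.norm_of_nonneg (gg_nonneg _ _ _ _)]; exact gg_bdd μ k hK v)
  have h0 : (μ.prod ν) K ≠ 0 := by
    intro h; simp [measureReal_def, h] at hpos
  have htop : (μ.prod ν) K ≠ ⊤ := hK.measure_lt_top.ne
  have hi2 : IntegrableOn (fun z : U × V => z.2) K (μ.prod ν) :=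
    (continuous_snd.continuousOn).integrableOn_compact hK
  have := (hyp_convex μ hk hk0 hK hKc).set_average_mem (hyp_closed μ hk0 hK) h0 htop
    (f := fun z : U × V => (z.2, gg μ k K z.2)) (μ := μ.prod ν) (by
      refine (ae_restrict_iff' hK.measurableSet).2 (Filter.Eventually.of_forall fun z hz => ?_)
      exact ⟨⟨z, hz, rfl⟩, le_rfl⟩) (hi2.prodMk hF.1)
  rw [setAverage_eq, integral_pair hi2 hF.1] at this
  have h2 := this.2
  simp only [Prod.smul_mk, smul_eq_mul, hF.2] at h2
  rw [inv_mul_le_iff₀ hpos, mul_comm] at h2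
  have e : ∀ v, gg μ k K v ^ (k + 1) = gg μ k K v * μ.real (sec K v) := by
    intro v; rw [← gg_pow μ hk0]; ring
  simp only [e]
  exact h2

theorem scale_ineq (μ : Measure U) [μ.IsAddHaarMeasure] (ν : Measure V) [ν.IsAddHaarMeasure]
    {k m : ℕ} (hk : Module.finrank ℝ U = k) (hm : Module.finrank ℝ V = m)
    (hk0 : k ≠ 0) {K : Set (U × V)} (hK : IsCompact K) (hKc : Convex ℝ K)
    {v0 : V} (hv0 : v0 ∈ Prod.snd '' K) {t : ℝ} (ht0 : 0 < t) (ht1 : t < 1) :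
    (k + 1) * t * gg μ k K v0 * (1 - t) ^ (k + m) * (μ.prod ν).real K ≤
      ∫ v, gg μ k K v ^ (k + 1) ∂ν := by
  have h1 : 0 < 1 - t := by linarith
  have hvol : (μ.prod ν).real K = ∫ v, gg μ k K v ^ k ∂ν := by
    have := (fub μ ν hK (φ := fun _ => 1) measurable_const (M := 1) (by simp)).2
    simpa [gg_pow μ hk0] using this
  have hint : ∀ j : ℕ, j ≠ 0 → Integrable (fun v => gg μ k K v ^ j) ν := by
    intro j hj
    rw [← integrableOn_iff_integrable_of_support_subset (s := Prod.snd '' K)]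
    · refine Measure.integrableOn_of_bounded (M := (μ.real (Prod.fst '' K) ^ ((k : ℝ)⁻¹)) ^ j)
        (hK.image continuous_snd).measure_lt_top.ne
        ((gg_measurable μ k hK).pow_const j).aestronglyMeasurable
        (Filter.Eventually.of_forall fun v => ?_)
      rw [Real.norm_of_nonneg (pow_nonneg (gg_nonneg _ _ _ _) _)]
      exact pow_le_pow_left₀ (gg_nonneg _ _ _ _) (gg_bdd μ k hK v) _
    · intro v hv
      by_contra h
      exact hv (by simp [gg_of_notMem μ hk0 h, hj])
  set M := gg μ k K v0 with hMdef
  have hM0 : 0 ≤ M := gg_nonneg _ _ _ _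
  have hpt : ∀ v, (1 - t) ^ (k + 1) * gg μ k K v ^ (k + 1) +
      ((k + 1) * t * M * (1 - t) ^ k) * gg μ k K v ^ k ≤
      gg μ k K (t • v0 + (1 - t) • v) ^ (k + 1) := by
    intro v
    by_cases hv : v ∈ Prod.snd '' K
    · have hc := gg_concave μ hk hk0 hK hKc ht0.le ht1.le hv hv0
      rw [add_comm (t • v0)]
      refine le_trans ?_ (pow_le_pow_left₀ (add_nonneg (mul_nonneg h1.le (gg_nonneg _ _ _ _))
        (mul_nonneg ht0.le hM0)) hc (k + 1))
      have hx : 0 ≤ (1 - t) * gg μ k K v := mul_nonneg h1.le (gg_nonneg _ _ _ _)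
      have hy : 0 ≤ t * M := mul_nonneg ht0.le hM0
      have b : ((1 - t) * gg μ k K v) ^ (k + 1) + (k + 1) * ((1 - t) * gg μ k K v) ^ k * (t * M)
          ≤ ((1 - t) * gg μ k K v + t * M) ^ (k + 1) := by
        generalize (1 - t) * gg μ k K v = x at hx
        generalize t * M = y at hy
        clear * - hx hy
        induction k with
        | zero => simp
        | succ k ih =>
          calc _ ≤ (x ^ (k + 1) + (k + 1) * x ^ k * y) * (x + y) := by
                have : 0 ≤ (k + 1) * x ^ k * y * y := by positivity
                push_cast
                ring_nf at this ⊢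
                linarith
            _ ≤ (x + y) ^ (k + 1) * (x + y) := by gcongr
            _ = _ := by ring
      rw [mul_pow, mul_pow] at b
      refine le_trans (le_of_eq ?_) b
      ring
    · rw [gg_of_notMem μ hk0 hv]
      simp only [ne_eq, Nat.add_eq_zero_iff, one_ne_zero, and_false, not_false_eq_true, zero_pow,
        mul_zero, hk0, add_zero]
      exact pow_nonneg (gg_nonneg _ _ _ _) _
  have hcv : ∫ v, gg μ k K (t • v0 + (1 - t) • v) ^ (k + 1) ∂ν =
      ((1 - t) ^ m)⁻¹ * ∫ v, gg μ k K v ^ (k + 1) ∂ν := by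
    rw [Measure.integral_comp_smul ν (fun v => gg μ k K (t • v0 + v) ^ (k + 1)) (1 - t),
      integral_add_left_eq_self (fun v => gg μ k K v ^ (k + 1)), hm,
      abs_of_pos (by positivity), smul_eq_mul]
  have hint' : Integrable (fun v => gg μ k K (t • v0 + (1 - t) • v) ^ (k + 1)) ν :=
    ((hint (k+1) (by simp)).comp_add_left (t • v0)).comp_smul h1.ne'
  have hI := integral_mono (((hint (k+1) (by simp)).const_mul _).add ((hint k hk0).const_mul _))
    hint' hpt
  simp only [Pi.add_apply] at hI
  rw [hcv, integral_add ((hint (k+1) (by simp)).const_mul _) ((hint k hk0).const_mul _),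
    integral_const_mul, integral_const_mul, ← hvol] at hI
  have hI0 : 0 ≤ ∫ v, gg μ k K v ^ (k + 1) ∂ν :=
    integral_nonneg fun v => pow_nonneg (gg_nonneg _ _ _ _) _
  have hI2 : (k + 1) * t * M * (1 - t) ^ k * (μ.prod ν).real K ≤
      ((1 - t) ^ m)⁻¹ * ∫ v, gg μ k K v ^ (k + 1) ∂ν := by
    have : 0 ≤ (1 - t) ^ (k + 1) * ∫ v, gg μ k K v ^ (k + 1) ∂ν := by positivity
    linarith
  rw [← div_eq_inv_mul, le_div_iff₀ (by positivity)] at hI2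
  refine le_trans (le_of_eq ?_) hI2
  rw [pow_add]; ring

theorem exp_bound {x : ℝ} (hx : 0 ≤ x) {n : ℕ} (hn : 0 < n) : (1 + x / n) ^ n ≤ Real.exp x := by
  calc (1 + x / n) ^ n ≤ (Real.exp (x / n)) ^ n :=
        pow_le_pow_left₀ (by positivity) (by rw [add_comm]; exact Real.add_one_le_exp _) n
    _ = Real.exp x := by rw [← Real.exp_nat_mul]; congr 1; field_simp

theorem fradelizi (μ : Measure U) [μ.IsAddHaarMeasure] (ν : Measure V) [ν.IsAddHaarMeasure]
    {k n : ℕ} (hk : Module.finrank ℝ U = k) (hm : k + Module.finrank ℝ V = n)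
    (hk0 : k ≠ 0) {K : Set (U × V)} (hK : IsCompact K) (hKc : Convex ℝ K)
    (hpos : 0 < (μ.prod ν).real K) (v : V) :
    gg μ k K v ≤ Real.exp 1 * (n / k) *
      gg μ k K (((μ.prod ν).real K)⁻¹ • ∫ z in K, z.2 ∂(μ.prod ν)) := by
  have hkn : k ≤ n := by omega
  have hn : 0 < n := by omega
  have hkR : (0:ℝ) < k := by positivity
  have hnR : (0:ℝ) < n := by positivity
  have hknR : (k:ℝ) ≤ n := by exact_mod_cast hkn
  by_cases hv : v ∈ Prod.snd '' K
  swap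
  · rw [gg_of_notMem μ hk0 hv]
    have := gg_nonneg μ k K (((μ.prod ν).real K)⁻¹ • ∫ z in K, z.2 ∂(μ.prod ν))
    positivity
  have hs := (scale_ineq μ ν hk rfl hk0 hK hKc hv (t := 1 / (n + 1)) (by positivity)
    (by rw [div_lt_one (by positivity)]; linarith)).trans (jensen μ ν hk hk0 hK hKc hpos)
  rw [hm] at hs
  have hs := le_of_mul_le_mul_right hs hpos
  generalize gg μ k K (((μ.prod ν).real K)⁻¹ • ∫ z in K, z.2 ∂(μ.prod ν)) = B at hs
  have hG := gg_nonneg μ k K v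
  generalize gg μ k K v = G at hs hG
  have e1 : (1 - 1 / ((n:ℝ) + 1)) ^ n = ((1 + 1 / (n:ℝ)) ^ n)⁻¹ := by
    rw [← inv_pow]; congr 1; field_simp; ring
  have e2 : (1 + 1 / (n:ℝ)) ^ n ≤ Real.exp 1 := by
    exact exp_bound zero_le_one hn
  have e3 : (k:ℝ) / n ≤ (k + 1) * (1 / (n + 1)) := by
    rw [mul_one_div, div_le_div_iff₀ (by positivity) (by positivity)]; nlinarith
  have e4 : (Real.exp 1)⁻¹ ≤ (1 - 1 / ((n:ℝ) + 1)) ^ n := by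
    rw [e1]; exact inv_anti₀ (by positivity) e2
  have : (k:ℝ) / n * G * (Real.exp 1)⁻¹ ≤ B := by
    refine le_trans ?_ hs
    gcongr
  calc G = Real.exp 1 * (n / k) * ((k:ℝ) / n * G * (Real.exp 1)⁻¹) := by
        field_simp
    _ ≤ _ := by gcongr

theorem compact_diff {K : Set (U × V)} (hK : IsCompact K) : IsCompact (K - K) := by
  rw [sub_eq_add_neg]; exact hK.add hK.neg

theorem rudelson (μ : Measure U) [μ.IsAddHaarMeasure] (ν : Measure V) [ν.IsAddHaarMeasure]
    {k n : ℕ} (hk : Module.finrank ℝ U = k) (hm : k + Module.finrank ℝ V = n)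
    {K : Set (U × V)} (hK : IsCompact K) (hKc : Convex ℝ K)
    (hpos : (μ.prod ν) K ≠ 0) {S : ℝ≥0∞} (hS : ∀ v, μ (sec K v) ≤ S)
    {t : ℝ} (ht0 : 0 < t) (ht1 : t < 1) :
    ENNReal.ofReal (t ^ k * (1 - t) ^ n) * μ (sec (K - K) 0) ≤ S := by
  have h1 : 0 < 1 - t := by linarith
  have htop : (μ.prod ν) K ≠ ⊤ := hK.measure_lt_top.ne
  have hD : IsCompact (sec (K - K) 0) := sec_compact (compact_diff hK) 0
  let F : U → U × V → ℝ≥0∞ := fun h z =>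
    K.indicator 1 z * K.indicator 1 ((z.1 - h, z.2) : U × V)
  have hmi : Measurable (K.indicator (1 : U × V → ℝ≥0∞)) :=
    measurable_one.indicator hK.measurableSet
  have hFm : Measurable (Function.uncurry F) := by
    refine (hmi.comp measurable_snd).mul (hmi.comp ?_)
    exact Continuous.measurable (by fun_prop)
  have hup : ∫⁻ h, ∫⁻ z, F h z ∂(μ.prod ν) ∂μ ≤ (μ.prod ν) K * S := by
    rw [lintegral_lintegral_swap hFm.aemeasurable]
    calc ∫⁻ z, ∫⁻ h, F h z ∂μ ∂(μ.prod ν) ≤ ∫⁻ z, K.indicator 1 z * S ∂(μ.prod ν) := by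
          refine lintegral_mono fun z => ?_
          have hm2 : Measurable fun u : U => K.indicator (1 : U × V → ℝ≥0∞) (u, z.2) :=
            hmi.comp measurable_prodMk_right
          have hm3 : Measurable fun h : U => K.indicator (1 : U × V → ℝ≥0∞) (z.1 - h, z.2) :=
            hm2.comp (measurable_const.sub measurable_id)
          simp only [F]
          rw [lintegral_const_mul _ hm3,
            lintegral_sub_left_eq_self (fun u => K.indicator (1 : U × V → ℝ≥0∞) (u, z.2)) z.1]
          gcongr
          have e : (fun u => K.indicator (1 : U × V → ℝ≥0∞) (u, z.2)) =
            (sec K z.2).indicator 1 := by ext u; rfl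
          rw [e, lintegral_indicator_one (sec_compact hK _).measurableSet]
          exact hS _
      _ = (μ.prod ν) K * S := by
          rw [lintegral_mul_const _ hmi, lintegral_indicator_one hK.measurableSet]
  have hlow : ∀ h ∈ t • sec (K - K) 0,
      ENNReal.ofReal ((1 - t) ^ n) * (μ.prod ν) K ≤ ∫⁻ z, F h z ∂(μ.prod ν) := by
    rintro _ ⟨u, ⟨a, ha, b, hb, hab⟩, rfl⟩
    have hsub : (fun z => t • a + z) '' ((1 - t) • K) ⊆ K := by
      rintro _ ⟨_, ⟨z, hz, rfl⟩, rfl⟩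
      exact hKc ha hz ht0.le h1.le (by ring)
    have hvol : (μ.prod ν) ((fun z => t • a + z) '' ((1 - t) • K)) =
        ENNReal.ofReal ((1 - t) ^ n) * (μ.prod ν) K := by
      rw [image_add_left, measure_preimage_add, Measure.addHaar_smul, Module.finrank_prod, hk, hm,
        abs_of_pos (by positivity)]
    have hms : MeasurableSet ((fun z => t • a + z) '' ((1 - t) • K)) :=
      ((hK.smul (1 - t)).image (by fun_prop)).measurableSet
    rw [← hvol, ← lintegral_indicator_one hms]
    refine lintegral_mono fun z => ?_
    by_cases hz : z ∈ (fun z => t • a + z) '' ((1 - t) • K)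
    · have hz1 := hsub hz
      have hz2 : (z.1 - t • u, z.2) ∈ K := by
        obtain ⟨_, ⟨w, hw, rfl⟩, rfl⟩ := hz
        have : t • b + (1 - t) • w ∈ K := hKc hb hw ht0.le h1.le (by ring)
        convert this using 1
        have hab' : a - b = (u, 0) := hab
        have : b = a - (u, 0) := by rw [← hab']; abel
        rw [this]
        ext <;> simp [smul_sub]; abel
      simp only [F]
      rw [indicator_of_mem hz, indicator_of_mem hz1, indicator_of_mem hz2]
      simp
    · rw [indicator_of_notMem hz]; exact zero_le
  have hlow2 : ENNReal.ofReal ((1 - t) ^ n) * (μ.prod ν) K * μ (t • sec (K - K) 0) ≤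
      (μ.prod ν) K * S := by
    refine le_trans ?_ hup
    rw [← setLIntegral_const]
    exact (setLIntegral_mono' (hD.smul t).measurableSet hlow).trans (setLIntegral_le_lintegral _ _)
  rw [Measure.addHaar_smul, hk, abs_of_pos (by positivity)] at hlow2
  refine (ENNReal.mul_le_mul_iff_right hpos htop).1 (le_trans (le_of_eq ?_) hlow2)
  rw [ENNReal.ofReal_mul (by positivity)]
  ring

theorem main_abs (μ : Measure U) [μ.IsAddHaarMeasure] (ν : Measure V) [ν.IsAddHaarMeasure]
    {k n : ℕ} (hk : Module.finrank ℝ U = k) (hm : k + Module.finrank ℝ V = n) (hk0 : k ≠ 0)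
    {K : Set (U × V)} (hK : IsCompact K) (hKc : Convex ℝ K) (hKi : (interior K).Nonempty) :
    μ (sec (K - K) 0) ^ ((k : ℝ)⁻¹) ≤
      ENNReal.ofReal (2 * Real.exp 1 ^ 2 * ((n : ℝ) / k) ^ 2) *
        μ (sec K (((μ.prod ν).real K)⁻¹ • ∫ z in K, z.2 ∂(μ.prod ν))) ^ ((k : ℝ)⁻¹) := by
  have h0 : (μ.prod ν) K ≠ 0 :=
    ((isOpen_interior.measure_pos _ hKi).trans_le (measure_mono interior_subset)).ne'
  have htop : (μ.prod ν) K ≠ ⊤ := hK.measure_lt_top.ne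
  have hpos : 0 < (μ.prod ν).real K := ENNReal.toReal_pos h0 htop
  set b := ((μ.prod ν).real K)⁻¹ • ∫ z in K, z.2 ∂(μ.prod ν) with hb
  have hfr := fradelizi μ ν hk hm hk0 hK hKc hpos
  rw [← hb] at hfr
  have hgb := gg_nonneg μ k K b
  have hkn : k ≤ n := by omega
  have hn : 0 < n := by omega
  have hkR : (0:ℝ) < k := by positivity
  have hnR : (0:ℝ) < n := by positivity
  have hknR : (k:ℝ) ≤ n := by exact_mod_cast hkn
  have hS : ∀ v, μ (sec K v) ≤ ENNReal.ofReal ((Real.exp 1 * (n / k) * gg μ k K b) ^ k) := by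
    intro v
    rw [← ENNReal.ofReal_toReal (sec_compact hK v).measure_lt_top.ne]
    refine ENNReal.ofReal_le_ofReal ?_
    rw [← measureReal_def, ← gg_pow μ hk0]
    exact pow_le_pow_left₀ (gg_nonneg _ _ _ _) (hfr v) k
  have hr := rudelson μ ν hk hm hK hKc h0 hS (t := k / (n + k)) (by positivity)
    (by rw [div_lt_one (by positivity)]; linarith)
  have hDt : μ (sec (K - K) 0) ≠ ⊤ := (sec_compact (compact_diff hK) 0).measure_lt_top.ne
  have e0 : (1:ℝ) - k / (n + k) = n / (n + k) := by field_simp; ring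
  have hr2 : (k / (n + k) : ℝ) ^ k * (n / (n + k)) ^ n * μ.real (sec (K - K) 0) ≤
      (Real.exp 1 * (n / k) * gg μ k K b) ^ k := by
    have := ENNReal.toReal_mono ENNReal.ofReal_ne_top hr
    rwa [ENNReal.toReal_mul, e0, ENNReal.toReal_ofReal (by positivity),
      ENNReal.toReal_ofReal (by positivity), ← measureReal_def] at this
  have e1 : (((n:ℝ) + k) / n) ^ n ≤ Real.exp 1 ^ k := by
    have := exp_bound hkR.le hn
    rw [← Real.exp_nat_mul, mul_one]
    convert this using 2
    field_simp
  have e2 : (((n:ℝ) + k) / k) ^ k ≤ (2 * (n / k)) ^ k := by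
    gcongr
    rw [← mul_div_assoc]
    gcongr
    linarith
  have hr3 : μ.real (sec (K - K) 0) ≤
      (2 * Real.exp 1 ^ 2 * ((n : ℝ) / k) ^ 2 * gg μ k K b) ^ k := by
    calc μ.real (sec (K - K) 0) = (((n:ℝ) + k) / k) ^ k * (((n:ℝ) + k) / n) ^ n *
          ((k / (n + k) : ℝ) ^ k * (n / (n + k)) ^ n * μ.real (sec (K - K) 0)) := by
          simp only [div_pow]
          field_simp
      _ ≤ (2 * (n / k)) ^ k * Real.exp 1 ^ k * (Real.exp 1 * (n / k) * gg μ k K b) ^ k := by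
          gcongr
      _ = _ := by rw [← mul_pow, ← mul_pow]; congr 1; ring
  rw [← ENNReal.ofReal_toReal hDt,
    ← ENNReal.ofReal_toReal (sec_compact hK b).measure_lt_top.ne,
    ENNReal.ofReal_rpow_of_nonneg ENNReal.toReal_nonneg (by positivity),
    ENNReal.ofReal_rpow_of_nonneg ENNReal.toReal_nonneg (by positivity),
    ← ENNReal.ofReal_mul (by positivity)]
  refine ENNReal.ofReal_le_ofReal ?_
  rw [← measureReal_def, ← measureReal_def]
  refine (Real.rpow_le_rpow measureReal_nonneg hr3 (by positivity)).trans (le_of_eq ?_)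
  rw [Real.pow_rpow_inv_natCast (by positivity) hk0, gg]

end body

theorem stmt15 :
    ∃ c : ℝ, 0 < c ∧ ∀ (n : ℕ),
      ∀ K : Set (EuclideanSpace ℝ (Fin n)),
        IsCompact K → Convex ℝ K → (interior K).Nonempty →
        ∀ k : ℕ, 1 ≤ k → k ≤ n - 1 →
          ∀ H : Submodule ℝ (EuclideanSpace ℝ (Fin n)), Module.finrank ℝ H = k →
            (μH[(k : ℝ)] ((K - K) ∩ (H : Set _))) ^ ((k : ℝ)⁻¹) ≤
              ENNReal.ofReal (c * ((n : ℝ) / k) ^ 2) *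
                (μH[(k : ℝ)] (K ∩ ((fun x => barycenter K + x) '' (H : Set _)))) ^
                  ((k : ℝ)⁻¹) := by
  refine ⟨2 * Real.exp 1 ^ 2, by positivity, ?_⟩
  intro n K hK hKc hKi k hk1 hkn H hHk
  have hμ : (μH[(k : ℝ)] : Measure H).IsAddHaarMeasure := by
    rw [← hHk]; infer_instance
  let e : (H × Hᗮ) ≃L[ℝ] EuclideanSpace ℝ (Fin n) :=
    (Submodule.prodEquivOfIsCompl H Hᗮ H.isCompl_orthogonal).toContinuousLinearEquiv
  have he : ∀ p : H × Hᗮ, e p = p.1 + p.2 := fun p =>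
    Submodule.coe_prodEquivOfIsCompl' H Hᗮ H.isCompl_orthogonal p
  set K' : Set (H × Hᗮ) := e ⁻¹' K with hK'
  have hK'c : IsCompact K' := e.toHomeomorph.isCompact_preimage.2 hK
  have hK'v : Convex ℝ K' := hKc.linear_preimage e.toLinearEquiv.toLinearMap
  have hK'i : (interior K').Nonempty := by
    have : interior K' = e ⁻¹' interior K := (e.toHomeomorph.preimage_interior K).symm
    rw [this]
    obtain ⟨x, hx⟩ := hKi
    exact ⟨e.symm x, by simpa using hx⟩
  have hdim : k + Module.finrank ℝ Hᗮ = n := by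
    rw [← hHk, H.finrank_add_finrank_orthogonal, finrank_euclideanSpace_fin]
  have main := main_abs (μH[(k : ℝ)] : Measure H) (volume : Measure Hᗮ) hHk hdim (by omega)
    hK'c hK'v hK'i
  set lam : Measure (H × Hᗮ) := (μH[(k : ℝ)] : Measure H).prod (volume : Measure Hᗮ) with hlam
  set b := (lam.real K')⁻¹ • ∫ z in K', z.2 ∂lam with hb
  have hbar : (e.symm (barycenter K)).2 = b := by
    haveI : lam.IsAddHaarMeasure := by rw [hlam]; infer_instance
    haveI := e.isAddHaarMeasure_map lam
    have hc := Measure.isAddLeftInvariant_eq_smul (volume : Measure (EuclideanSpace ℝ (Fin n)))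
      (Measure.map e lam)
    obtain ⟨c, hc⟩ : ∃ c : NNReal, (volume : Measure (EuclideanSpace ℝ (Fin n))) =
      c • Measure.map e lam := ⟨_, hc⟩
    have hc0 : c ≠ 0 := by
      rintro rfl
      rw [zero_smul] at hc
      have := (isOpen_interior.measure_pos (volume : Measure (EuclideanSpace ℝ (Fin n))) hKi)
      rw [hc] at this
      simp at this
    let q : EuclideanSpace ℝ (Fin n) →L[ℝ] Hᗮ :=
      (ContinuousLinearMap.snd ℝ H Hᗮ).comp (e.symm : EuclideanSpace ℝ (Fin n) →L[ℝ] (H × Hᗮ))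
    have hq : ∀ x, (e.symm x).2 = q x := fun x => rfl
    have hqe : ∀ z, q (e z) = z.2 := fun z => by simp [q]
    have hme : MeasurableEmbedding e := e.toHomeomorph.measurableEmbedding
    have hint : q (∫ x in K, x) = ∫ x in K, q x :=
      (q.integral_comp_comm (continuous_id.continuousOn.integrableOn_compact hK)).symm
    have hint2 : ∫ x in K, q x = (c : ℝ) • ∫ z in K', z.2 ∂lam := by
      rw [hc, Measure.restrict_smul, integral_smul_nnreal_measure, hme.setIntegral_map]
      simp only [hqe]
      rfl
    have hvol : (volume K).toReal = c * lam.real K' := by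
      rw [hc, Measure.smul_apply, hme.map_apply]
      simp [measureReal_def, ENNReal.smul_def, hK']
    rw [hq, barycenter, map_smul, hint, hint2, hvol, hb, smul_smul]
    congr 1
    have : (c:ℝ) ≠ 0 := by exact_mod_cast hc0
    field_simp
  have hk0 : (0:ℝ) ≤ k := by positivity
  have e1 : (K - K) ∩ (H : Set (EuclideanSpace ℝ (Fin n))) =
      (Subtype.val : H → _) '' sec (K' - K') 0 := by
    ext x
    constructor
    · rintro ⟨⟨a, ha, a', ha', rfl⟩, hx⟩
      refine ⟨⟨_, hx⟩, ⟨e.symm a, by simpa [hK'] using ha, e.symm a', by simpa [hK'] using ha', ?_⟩,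
        rfl⟩
      apply e.injective
      show e (e.symm a - e.symm a') = e (⟨a - a', hx⟩, 0)
      rw [map_sub, e.apply_symm_apply, e.apply_symm_apply, he]
      simp
    · rintro ⟨u, ⟨a, ha, a', ha', h⟩, rfl⟩
      refine ⟨⟨e a, ha, e a', ha', ?_⟩, u.2⟩
      have h : a - a' = (u, 0) := h
      show e a - e a' = u
      rw [← map_sub, h, he]
      simp
  have e2 : K ∩ ((fun x => barycenter K + x) '' (H : Set _)) =
      (fun u : H => (b : EuclideanSpace ℝ (Fin n)) + u) '' sec K' b := by
    obtain ⟨p, hbe⟩ : ∃ p : H, barycenter K = p + (b : EuclideanSpace ℝ (Fin n)) :=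
      ⟨(e.symm (barycenter K)).1, by rw [← hbar, ← he, e.apply_symm_apply]⟩
    ext x
    constructor
    · rintro ⟨hx, y, hy, rfl⟩
      have h' : barycenter K + y = b + (p + ⟨y, hy⟩ : H) := by
        conv_lhs => rw [hbe]
        simp; abel
      refine ⟨p + ⟨y, hy⟩, ?_, h'.symm⟩
      show e _ ∈ K
      rw [he, add_comm]
      simp only at hx
      rwa [h'] at hx
    · rintro ⟨u, hu, rfl⟩
      have hu : e (u, b) ∈ K := hu
      rw [he, add_comm] at hu
      refine ⟨hu, ((u - p : H) : EuclideanSpace ℝ (Fin n)),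
        Submodule.coe_mem _, ?_⟩
      simp only
      conv_lhs => rw [hbe]
      simp; abel
  have hiso : Isometry (fun u : H => (b : EuclideanSpace ℝ (Fin n)) + u) :=
    (isometry_add_left _).comp isometry_subtype_coe
  rw [e1, e2, Isometry.hausdorffMeasure_image isometry_subtype_coe (Or.inl hk0),
    Isometry.hausdorffMeasure_image hiso (Or.inl hk0)]
  exact main
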